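/- Let m ≥ 1 and let POS = { min(2^s, m) : s ∈ ℤ_{≥0} } ⊆ {1,…,m} with associated prev and next. Let o ∈ ℝ^m be non-increasing with o ≥ 0 entrywise, and let ρ : POS → ℝ_{≥0} be non-increasing with ρ_k ≤ 2·o_k + o_1/m for every k ∈ POS. Let ρ⃗ ∈ ℝ^m be the expansion of ρ. Then Top_k(ρ⃗) ≤ 4·Top_k(o) for every k ∈ POS, Top_k(ρ⃗) ≤ 8·Top_k(o) for every k ∈ {1,…,m}, and consequently φ(ρ⃗) ≤ 8·φ(o) for every symmetric monotone norm φ : ℝ^m → ℝ. -/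

import Mathlib

/-- The top-`k` norm: the sum of the `k` largest values among `|u 1|, …, |u m|`,
expressed as the supremum over all size-`k` subsets of the sum of absolute values. -/
noncomputable def topk {m : ℕ} (k : ℕ) (u : Fin m → ℝ) : ℝ :=
  sSup {t : ℝ | ∃ S : Finset (Fin m), S.card = k ∧ t = ∑ j ∈ S, |u j|}

/-- The power-of-two index set `POS = { min(2^s, m) : s ∈ ℤ_{≥0} } ⊆ {1,…,m}`. -/
def pow2POS (m : ℕ) : Set ℕ := {k | ∃ s : ℕ, k = min (2 ^ s) m}

/-- `prev(k)`: the largest element of `POS` smaller than `k` (and `prev 1 = 0`). -/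
noncomputable def prevIdx (POS : Set ℕ) (k : ℕ) : ℕ := sSup {t | t ∈ POS ∧ t < k}

/-- The `k`-th entry (1-indexed) of a vector `u ∈ ℝ^m`, for `k ∈ {1,…,m}`. -/
def ent {m : ℕ} (u : Fin m → ℝ) (k : ℕ) : ℝ :=
  if h : k - 1 < m then u ⟨k - 1, h⟩ else 0

/-- The expansion `ρ⃗ ∈ ℝ^m` of `ρ : POS → ℝ`: `ρ⃗_k = ρ_k` if `k ∈ POS`,
and `ρ⃗_k = ρ_{prev(k)}` otherwise (entries 1-indexed). -/
noncomputable def expandVec (m : ℕ) (POS : Set ℕ) (ρ : ℕ → ℝ) : Fin m → ℝ :=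
  fun i =>
    haveI := Classical.dec ((i.val + 1) ∈ POS)
    if (i.val + 1) ∈ POS then ρ (i.val + 1) else ρ (prevIdx POS (i.val + 1))

/-!
The entry `ρ⃗_k` is a value `ρ_p` with `k < 2p`, so `ρ⃗` lies below the non-increasing vector with
entries `2 o_{⌊k/2⌋ + 1} + o_1 / m`. The indices `⌊k/2⌋ + 1` run through
`1, 2, 2, 3, 3, …`: each value of `o` is repeated twice except `o_1`, and the copy of `o_1` that is
thereby saved pays for the summands `o_1 / m`. This gives `Top_k(ρ⃗) ≤ 4 Top_k(o)` for every `k`.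

The passage to symmetric monotone norms is Ky Fan dominance, proved by duality: a linear functional
norming `u` has coefficients whose positive part, after sorting and summation by parts, only sees
the top-`k` norms of `u`.
-/

open Finset

section OrderedSums

theorem sum_le_sum_range_card_of_antitone {M : Type*} [AddCommMonoid M] [PartialOrder M]
    [IsOrderedAddMonoid M] {g : ℕ → M} (hg : Antitone g) (S : Finset ℕ) :
    ∑ n ∈ S, g n ≤ ∑ n ∈ range S.card, g n := by
  induction S using Finset.induction_on_max with
  | empty => simp
  | insert a s hs ih =>
    have ha : a ∉ s := fun h => lt_irrefl _ (hs a h)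
    have hcard : s.card ≤ a := by
      simpa using card_le_card (fun x hx => mem_range.2 (hs x hx) : s ⊆ range a)
    rw [sum_insert ha, card_insert_of_notMem ha, sum_range_succ, add_comm]
    exact add_le_add ih (hg hcard)

theorem sum_range_mul_le_sum_range_mul_of_antitone {R : Type*} [Ring R] [PartialOrder R]
    [IsOrderedRing R] {c u v : ℕ → R} {n : ℕ} (hc : Antitone c) (hc_nonneg : ∀ i, 0 ≤ c i)
    (h : ∀ k, 1 ≤ k → k ≤ n → ∑ i ∈ range k, u i ≤ ∑ i ∈ range k, v i) :
    ∑ i ∈ range n, c i * u i ≤ ∑ i ∈ range n, c i * v i := by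
  obtain rfl | hn := n.eq_zero_or_pos
  · simp
  simp only [← smul_eq_mul, sum_range_by_parts c]
  refine sub_le_sub (smul_le_smul_of_nonneg_left (h n hn le_rfl) (hc_nonneg _))
    (sum_le_sum fun i hi => ?_)
  have hi' : i < n - 1 := mem_range.1 hi
  exact smul_le_smul_of_nonpos_left (h (i + 1) (by omega) (by omega))
    (sub_nonpos.2 (hc i.le_succ))

theorem sum_range_two_mul_add_one_half {M : Type*} [AddCommMonoid M] (f : ℕ → M) (k : ℕ) :
    ∑ i ∈ range (2 * k + 1), f ((i + 1) / 2) + f 0 = 2 • ∑ i ∈ range (k + 1), f i := by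
  induction k with
  | zero => simp [two_nsmul]
  | succ k ih =>
    rw [show 2 * (k + 1) + 1 = 2 * k + 1 + 1 + 1 by ring, sum_range_succ, sum_range_succ,
      sum_range_succ _ (k + 1), show (2 * k + 1 + 1) / 2 = k + 1 by omega,
      show (2 * k + 1 + 1 + 1) / 2 = k + 1 by omega, nsmul_add, ← ih, two_nsmul]
    abel

theorem sum_range_half_add_le {M : Type*} [AddCommMonoid M] [PartialOrder M]
    [IsOrderedAddMonoid M] {f : ℕ → M} (hf : ∀ i, 0 ≤ f i) {k : ℕ} (hk : 1 ≤ k) :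
    ∑ i ∈ range k, f ((i + 1) / 2) + f 0 ≤ 2 • ∑ i ∈ range k, f i := by
  obtain ⟨k, rfl⟩ := Nat.exists_eq_add_of_le' hk
  rw [← sum_range_two_mul_add_one_half]
  gcongr
  · exact fun _ _ _ => hf _
  · omega

end OrderedSums

section Entries

variable {m : ℕ} {u : Fin m → ℝ}

theorem ent_val_add_one (u : Fin m → ℝ) (i : Fin m) : ent u (i + 1) = u i := by
  simp [ent]

theorem ent_nonneg (hu : ∀ i, 0 ≤ u i) (k : ℕ) : 0 ≤ ent u k := by
  unfold ent
  split_ifs with h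
  exacts [hu _, le_rfl]

theorem ent_antitone (hu : Antitone u) (hu_nonneg : ∀ i, 0 ≤ u i) : Antitone (ent u) := by
  intro k l hkl
  by_cases hl : l - 1 < m
  · have hk : k - 1 < m := by omega
    simpa only [ent, dif_pos hl, dif_pos hk] using hu (Nat.sub_le_sub_right hkl 1)
  · simpa only [ent, dif_neg hl] using ent_nonneg hu_nonneg k

theorem sum_mul_eq_sum_range_ent (u v : Fin m → ℝ) :
    ∑ i, u i * v i = ∑ n ∈ range m, ent u (n + 1) * ent v (n + 1) := by
  simp only [sum_range, ent_val_add_one]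

end Entries

section TopK

variable {m k : ℕ} {u : Fin m → ℝ}

theorem sum_abs_le_topk (u : Fin m → ℝ) (S : Finset (Fin m)) :
    ∑ i ∈ S, |u i| ≤ topk S.card u := by
  refine le_csSup ⟨∑ i, |u i|, ?_⟩ ⟨S, rfl, rfl⟩
  rintro _ ⟨T, -, rfl⟩
  exact sum_le_univ_sum_of_nonneg fun _ => abs_nonneg _

theorem topk_nonneg (k : ℕ) (u : Fin m → ℝ) : 0 ≤ topk k u := by
  refine Real.sSup_nonneg ?_
  rintro _ ⟨S, -, rfl⟩
  exact sum_nonneg fun _ _ => abs_nonneg _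

theorem topk_comp_perm (k : ℕ) (u : Fin m → ℝ) (σ : Equiv.Perm (Fin m)) :
    topk k (u ∘ σ) = topk k u := by
  unfold topk
  congr 1
  ext t
  constructor
  · rintro ⟨S, hS, rfl⟩
    exact ⟨S.map σ.toEmbedding, by simpa using hS, by simp⟩
  · rintro ⟨S, hS, rfl⟩
    exact ⟨S.map σ.symm.toEmbedding, by simpa using hS, by simp⟩

theorem topk_smul (k : ℕ) (a : ℝ) (u : Fin m → ℝ) : topk k (a • u) = |a| * topk k u := by
  unfold topk
  rw [← smul_eq_mul, ← Real.sSup_smul_of_nonneg (abs_nonneg a)]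
  congr 1
  ext t
  simp only [Set.mem_smul_set, Set.mem_ofPred_eq, Pi.smul_apply, smul_eq_mul, abs_mul, ← mul_sum]
  constructor
  · rintro ⟨S, hS, rfl⟩
    exact ⟨_, ⟨S, hS, rfl⟩, rfl⟩
  · rintro ⟨_, ⟨S, hS, rfl⟩, rfl⟩
    exact ⟨S, hS, rfl⟩

theorem sum_range_ent_le_topk (hk : k ≤ m) (u : Fin m → ℝ) :
    ∑ n ∈ range k, ent u (n + 1) ≤ topk k u := by
  let S : Finset (Fin m) := univ.map (Fin.castLEEmb hk)
  calc ∑ n ∈ range k, ent u (n + 1) = ∑ i ∈ S, u i := by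
        rw [sum_map, sum_range]
        exact sum_congr rfl fun i _ => ent_val_add_one u (Fin.castLE hk i)
    _ ≤ ∑ i ∈ S, |u i| := sum_le_sum fun i _ => le_abs_self (u i)
    _ ≤ topk S.card u := sum_abs_le_topk u S
    _ = topk k u := by simp [S]

theorem topk_le_sum_range (hk : k ≤ m) {g : ℕ → ℝ} (hg : Antitone g)
    (hu : ∀ i : Fin m, |u i| ≤ g i) : topk k u ≤ ∑ n ∈ range k, g n := by
  refine csSup_le ⟨_, univ.map (Fin.castLEEmb hk), by simp, rfl⟩ ?_
  rintro _ ⟨S, rfl, rfl⟩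
  calc ∑ i ∈ S, |u i| ≤ ∑ i ∈ S, g i := sum_le_sum fun i _ => hu i
    _ = ∑ n ∈ S.map Fin.valEmbedding, g n := by simp
    _ ≤ ∑ n ∈ range S.card, g n := by
        simpa using sum_le_sum_range_card_of_antitone hg (S.map Fin.valEmbedding)

theorem topk_le_sum_range_ent (hk : k ≤ m) (hu : Antitone u) (hu_nonneg : ∀ i, 0 ≤ u i) :
    topk k u ≤ ∑ n ∈ range k, ent u (n + 1) :=
  topk_le_sum_range hk (fun _ _ h => ent_antitone hu hu_nonneg (Nat.succ_le_succ h)) fun i => by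
    rw [ent_val_add_one, abs_of_nonneg (hu_nonneg i)]

end TopK

section Dominance

variable {m : ℕ} {u v : Fin m → ℝ}

theorem exists_perm_antitone_comp {α : Type*} [LinearOrder α] (f : Fin m → α) :
    ∃ σ : Equiv.Perm (Fin m), Antitone (f ∘ σ) :=
  ⟨Tuple.sort (OrderDual.toDual ∘ f), Tuple.monotone_sort (OrderDual.toDual ∘ f)⟩

theorem sum_mul_le_sum_mul_of_topk_le {c : Fin m → ℝ} (hc : Antitone c)
    (hc_nonneg : ∀ i, 0 ≤ c i) (hv : Antitone v) (hv_nonneg : ∀ i, 0 ≤ v i)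
    (h : ∀ k, 1 ≤ k → k ≤ m → topk k u ≤ topk k v) :
    ∑ i, c i * u i ≤ ∑ i, c i * v i := by
  simp only [sum_mul_eq_sum_range_ent]
  refine sum_range_mul_le_sum_range_mul_of_antitone
    (fun _ _ hkl => ent_antitone hc hc_nonneg (Nat.succ_le_succ hkl))
    (fun _ => ent_nonneg hc_nonneg _) fun k hk hkm => ?_
  exact (sum_range_ent_le_topk hkm u).trans
    ((h k hk hkm).trans (topk_le_sum_range_ent hkm hv hv_nonneg))

theorem exists_perm_sum_mul_le_of_topk_le {c : Fin m → ℝ} (hc_nonneg : ∀ i, 0 ≤ c i)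
    (hv_nonneg : ∀ i, 0 ≤ v i) (h : ∀ k, 1 ≤ k → k ≤ m → topk k u ≤ topk k v) :
    ∃ π : Equiv.Perm (Fin m), ∑ i, c i * u i ≤ ∑ i, c i * v (π i) := by
  obtain ⟨σ, hσ⟩ := exists_perm_antitone_comp c
  obtain ⟨τ, hτ⟩ := exists_perm_antitone_comp v
  refine ⟨σ.symm.trans τ, ?_⟩
  calc ∑ i, c i * u i = ∑ i, (c ∘ σ) i * (u ∘ σ) i := (Equiv.sum_comp σ fun i => c i * u i).symm
    _ ≤ ∑ i, (c ∘ σ) i * (v ∘ τ) i :=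
        sum_mul_le_sum_mul_of_topk_le hσ (fun _ => hc_nonneg _) hτ (fun _ => hv_nonneg _)
          (by simpa only [topk_comp_perm] using h)
    _ = ∑ i, c i * v (σ.symm.trans τ i) := by
        rw [← Equiv.sum_comp σ fun i => c i * v (σ.symm.trans τ i)]
        simp

theorem exists_linearMap_apply_eq_and_le_seminorm {E : Type*} [AddCommGroup E] [Module ℝ E]
    (φ : Seminorm ℝ E) (x : E) : ∃ f : E →ₗ[ℝ] ℝ, f x = φ x ∧ ∀ y, f y ≤ φ y := by
  obtain rfl | hx := eq_or_ne x 0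
  · exact ⟨0, by simp, fun y => by simp⟩
  let f₀ : E →ₗ.[ℝ] ℝ := LinearPMap.mkSpanSingleton x (φ x) hx
  have hf₀_le (y : f₀.domain) : f₀ y ≤ φ y := by
    obtain ⟨y, hy⟩ := y
    obtain ⟨a, rfl⟩ := Submodule.mem_span_singleton.1 hy
    rw [LinearPMap.mkSpanSingleton'_apply, map_smul_eq_mul]
    exact mul_le_mul_of_nonneg_right (Real.le_norm_self a) (apply_nonneg φ x)
  have hφ_smul (a : ℝ) (ha : 0 < a) (y : E) : φ (a • y) = a * φ y := by
    rw [map_smul_eq_mul, Real.norm_of_nonneg ha.le]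
  obtain ⟨f, hf_ext, hf_le⟩ :=
    exists_extension_of_le_sublinear f₀ φ hφ_smul (map_add_le_add φ) hf₀_le
  refine ⟨f, ?_, hf_le⟩
  exact (hf_ext ⟨x, Submodule.mem_span_singleton_self x⟩).trans
    (LinearPMap.mkSpanSingleton_apply ℝ ℝ hx (φ x))

theorem seminorm_le_of_topk_le (φ : Seminorm ℝ (Fin m → ℝ))
    (hφ_mono : ∀ w₁ w₂ : Fin m → ℝ, (∀ i, 0 ≤ w₁ i) → (∀ i, w₁ i ≤ w₂ i) → φ w₁ ≤ φ w₂)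
    (hφ_symm : ∀ w (π : Equiv.Perm (Fin m)), φ (w ∘ π) = φ w)
    (hu_nonneg : ∀ i, 0 ≤ u i) (hv_nonneg : ∀ i, 0 ≤ v i)
    (h : ∀ k, 1 ≤ k → k ≤ m → topk k u ≤ topk k v) : φ u ≤ φ v := by
  obtain ⟨f, hfu, hf_le⟩ := exists_linearMap_apply_eq_and_le_seminorm φ u
  let c : Fin m → ℝ := fun i => f fun j => if i = j then 1 else 0
  have hf_sum (w : Fin m → ℝ) : f w = ∑ i, c i * w i := by
    simpa only [smul_eq_mul, mul_comm] using f.pi_apply_eq_sum_univ w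
  obtain ⟨π, hπ⟩ := exists_perm_sum_mul_le_of_topk_le (c := fun i => max (c i) 0)
    (fun _ => le_max_right _ _) hv_nonneg h
  -- Killing the coordinates with `c i < 0` makes `f` agree with its positive part.
  let w : Fin m → ℝ := fun i => if 0 ≤ c i then v (π i) else 0
  calc φ u = ∑ i, c i * u i := by rw [← hfu, hf_sum]
    _ ≤ ∑ i, max (c i) 0 * u i :=
        sum_le_sum fun i _ => mul_le_mul_of_nonneg_right (le_max_left _ _) (hu_nonneg i)
    _ ≤ ∑ i, max (c i) 0 * v (π i) := hπ
    _ = f w := by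
        rw [hf_sum]
        refine sum_congr rfl fun i _ => ?_
        by_cases hi : 0 ≤ c i
        · simp [w, hi]
        · simp [w, hi, (not_le.1 hi).le]
    _ ≤ φ w := hf_le w
    _ ≤ φ (v ∘ π) := by
        refine hφ_mono _ _ (fun i => ?_) fun i => ?_ <;> dsimp only [w] <;> split_ifs
        exacts [hv_nonneg _, le_rfl, le_rfl, hv_nonneg _]
    _ = φ v := hφ_symm v π

end Dominance

section Expansion

variable {m : ℕ} {POS : Set ℕ}

theorem isGreatest_prevIdx {p k : ℕ} (hp : p ∈ POS) (hpk : p < k) :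
    IsGreatest {t | t ∈ POS ∧ t < k} (prevIdx POS k) := by
  have hbdd : BddAbove {t | t ∈ POS ∧ t < k} := ⟨k, fun _ ht => ht.2.le⟩
  exact ⟨Nat.sSup_mem ⟨p, hp, hpk⟩ hbdd, fun _ ht => le_csSup hbdd ht⟩

/-- The index set `POS` loses at most a factor two when rounding down: every half-open interval
`(k/2, k]` with `k ∈ {1,…,m}` meets `POS`. The bounds for the expansion hold over any such
index set. -/
def IsDyadicNet (m : ℕ) (POS : Set ℕ) : Prop :=
  ∀ k, 1 ≤ k → k ≤ m → ∃ p ∈ POS, p ≤ k ∧ k < 2 * p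

theorem isDyadicNet_pow2POS (m : ℕ) : IsDyadicNet m (pow2POS m) := by
  intro k hk hkm
  have hle : 2 ^ Nat.log 2 k ≤ k := Nat.pow_log_le_self 2 (by omega)
  refine ⟨2 ^ Nat.log 2 k, ⟨Nat.log 2 k, (min_eq_left (hle.trans hkm)).symm⟩, hle, ?_⟩
  rw [← pow_succ']
  exact Nat.lt_pow_succ_log_self one_lt_two k

theorem mem_Icc_of_mem_pow2POS {k : ℕ} (hm : 1 ≤ m) (hk : k ∈ pow2POS m) : k ∈ Icc 1 m := by
  obtain ⟨s, rfl⟩ := hk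
  exact mem_Icc.2 ⟨le_min Nat.one_le_two_pow hm, min_le_right _ _⟩

theorem exists_mem_expandVec_eq (hPOS : IsDyadicNet m POS) (ρ : ℕ → ℝ) (i : Fin m) :
    ∃ p ∈ POS, i + 1 < 2 * p ∧ expandVec m POS ρ i = ρ p := by
  by_cases hi : (i : ℕ) + 1 ∈ POS
  · exact ⟨i + 1, hi, by omega, by simp [expandVec, hi]⟩
  · obtain ⟨p, hp, hp_le, hp_lt⟩ := hPOS (i + 1) (by omega) i.isLt
    have hp_ne : p ≠ i + 1 := fun h => hi (h ▸ hp)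
    have hprev := isGreatest_prevIdx hp (lt_of_le_of_ne hp_le hp_ne)
    have hp_prev : p ≤ prevIdx POS (i + 1) := hprev.2 ⟨hp, lt_of_le_of_ne hp_le hp_ne⟩
    exact ⟨prevIdx POS (i + 1), hprev.1.1, by omega, by simp [expandVec, hi]⟩

theorem expandVec_nonneg (hPOS : IsDyadicNet m POS) {ρ : ℕ → ℝ} (hρ_nn : ∀ k ∈ POS, 0 ≤ ρ k)
    (i : Fin m) : 0 ≤ expandVec m POS ρ i := by
  obtain ⟨p, hp, -, h⟩ := exists_mem_expandVec_eq hPOS ρ i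
  exact h ▸ hρ_nn p hp

theorem expandVec_le (hPOS : IsDyadicNet m POS) {ρ b : ℕ → ℝ} (hb : Antitone b)
    (hρ_le : ∀ k ∈ POS, ρ k ≤ b k) (i : Fin m) : expandVec m POS ρ i ≤ b ((i + 1) / 2 + 1) := by
  obtain ⟨p, hp, hip, h⟩ := exists_mem_expandVec_eq hPOS ρ i
  exact h ▸ (hρ_le p hp).trans (hb (by omega))

theorem topk_expandVec_le (hPOS : IsDyadicNet m POS) {o : Fin m → ℝ} (ho_mono : Antitone o)
    (ho_nn : ∀ i, 0 ≤ o i) {ρ : ℕ → ℝ} (hρ_nn : ∀ k ∈ POS, 0 ≤ ρ k)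
    (hρ_le : ∀ k ∈ POS, ρ k ≤ 2 * ent o k + ent o 1 / m) {k : ℕ} (hk : 1 ≤ k) (hkm : k ≤ m) :
    topk k (expandVec m POS ρ) ≤ 4 * topk k o := by
  have hent : Antitone (ent o) := ent_antitone ho_mono ho_nn
  have hb : Antitone fun n => 2 * ent o n + ent o 1 / m := fun _ _ h => by
    dsimp only
    gcongr
    exact hent h
  have havg : k * (ent o 1 / m) ≤ ent o 1 := by
    have hkm' : (k : ℝ) / m ≤ 1 := div_le_one_of_le₀ (by exact_mod_cast hkm) m.cast_nonneg
    calc k * (ent o 1 / m) = k / m * ent o 1 := by ring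
      _ ≤ ent o 1 := mul_le_of_le_one_left (ent_nonneg ho_nn 1) hkm'
  have hhalf : ∑ n ∈ range k, ent o ((n + 1) / 2 + 1) + ent o 1
      ≤ 2 * ∑ n ∈ range k, ent o (n + 1) := by
    simpa only [nsmul_eq_mul, Nat.cast_ofNat, zero_add] using
      sum_range_half_add_le (f := fun n => ent o (n + 1)) (fun _ => ent_nonneg ho_nn _) hk
  calc topk k (expandVec m POS ρ)
      ≤ ∑ n ∈ range k, (2 * ent o ((n + 1) / 2 + 1) + ent o 1 / m) := by
        refine topk_le_sum_range (g := fun n => 2 * ent o ((n + 1) / 2 + 1) + ent o 1 / m) hkm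
          (fun _ _ h => hb (by omega)) fun i => ?_
        rw [abs_of_nonneg (expandVec_nonneg hPOS hρ_nn i)]
        exact expandVec_le hPOS hb hρ_le i
    _ = 2 * ∑ n ∈ range k, ent o ((n + 1) / 2 + 1) + k * (ent o 1 / m) := by
        simp [sum_add_distrib, mul_sum]
    _ ≤ 4 * ∑ n ∈ range k, ent o (n + 1) := by linarith [ent_nonneg ho_nn 1]
    _ ≤ 4 * topk k o := by
        gcongr
        exact sum_range_ent_le_topk hkm o

end Expansion

theorem expansion_norm_bound_pow2_general {m : ℕ} {POS : Set ℕ} (hPOS : IsDyadicNet m POS)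
    {o : Fin m → ℝ} (ho_mono : Antitone o) (ho_nn : ∀ i, 0 ≤ o i) {ρ : ℕ → ℝ}
    (hρ_nn : ∀ k ∈ POS, 0 ≤ ρ k)
    (hρ_le : ∀ k ∈ POS, ρ k ≤ 2 * ent o k + ent o 1 / m) :
    (∀ k, 1 ≤ k → k ≤ m → topk k (expandVec m POS ρ) ≤ 4 * topk k o) ∧
    ∀ φ : Seminorm ℝ (Fin m → ℝ),
      (∀ w₁ w₂ : Fin m → ℝ, (∀ i, 0 ≤ w₁ i) → (∀ i, w₁ i ≤ w₂ i) → φ w₁ ≤ φ w₂) →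
      (∀ w (π : Equiv.Perm (Fin m)), φ (w ∘ π) = φ w) →
      φ (expandVec m POS ρ) ≤ 4 * φ o := by
  have htop : ∀ k, 1 ≤ k → k ≤ m → topk k (expandVec m POS ρ) ≤ 4 * topk k o := fun _ =>
    topk_expandVec_le hPOS ho_mono ho_nn hρ_nn hρ_le
  refine ⟨htop, fun φ hφ_mono hφ_symm => ?_⟩
  calc φ (expandVec m POS ρ) ≤ φ ((4 : ℝ) • o) :=
        seminorm_le_of_topk_le φ hφ_mono hφ_symm (expandVec_nonneg hPOS hρ_nn)
          (fun i => mul_nonneg zero_le_four (ho_nn i))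
          fun k hk hkm => by simpa [topk_smul] using htop k hk hkm
    _ = 4 * φ o := by simp [map_smul_eq_mul]

/-- If `o ∈ ℝ^m` is non-increasing and nonnegative, and `ρ : POS → ℝ_{≥0}` is
non-increasing with `ρ_k ≤ 2·o_k + o_1/m` on `POS = {min(2^s,m)}`, then the expansion
`ρ⃗` satisfies `Top_k(ρ⃗) ≤ 4·Top_k(o)` for `k ∈ POS`, `Top_k(ρ⃗) ≤ 8·Top_k(o)` for all
`k ∈ {1,…,m}`, and hence `φ(ρ⃗) ≤ 8·φ(o)` for every symmetric monotone norm `φ`. -/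
theorem expansion_norm_bound_pow2 {m : ℕ} (hm : 1 ≤ m)
    (o : Fin m → ℝ) (ho_mono : Antitone o) (ho_nn : ∀ i, 0 ≤ o i)
    (ρ : ℕ → ℝ)
    (hρ_nn : ∀ k ∈ pow2POS m, 0 ≤ ρ k)
    (hρ_mono : ∀ k ∈ pow2POS m, ∀ k' ∈ pow2POS m, k ≤ k' → ρ k' ≤ ρ k)
    (hρ_le : ∀ k ∈ pow2POS m, ρ k ≤ 2 * ent o k + ent o 1 / m) :
    (∀ k ∈ pow2POS m,
        topk k (expandVec m (pow2POS m) ρ) ≤ 4 * topk k o) ∧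
    (∀ k, 1 ≤ k → k ≤ m →
        topk k (expandVec m (pow2POS m) ρ) ≤ 8 * topk k o) ∧
    (∀ φ : (Fin m → ℝ) → ℝ,
        (∀ w, φ w = 0 ↔ w = 0) →
        (∀ w₁ w₂, φ (w₁ + w₂) ≤ φ w₁ + φ w₂) →
        (∀ (θ : ℝ) w, φ (θ • w) = |θ| * φ w) →
        (∀ w₁ w₂, (∀ i, 0 ≤ w₁ i) → (∀ i, w₁ i ≤ w₂ i) → φ w₁ ≤ φ w₂) →
        (∀ w (π : Equiv.Perm (Fin m)), φ (w ∘ π) = φ w) →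
        φ (expandVec m (pow2POS m) ρ) ≤ 8 * φ o) := by
  obtain ⟨htop, hnorm⟩ :=
    expansion_norm_bound_pow2_general (isDyadicNet_pow2POS m) ho_mono ho_nn hρ_nn hρ_le
  refine ⟨fun k hk => ?_, fun k hk hkm => ?_, fun φ _ hadd hsmul hmono hsymm => ?_⟩
  · obtain ⟨hk1, hkm⟩ := mem_Icc.1 (mem_Icc_of_mem_pow2POS hm hk)
    exact htop k hk1 hkm
  · linarith [htop k hk hkm, topk_nonneg k o]
  · let N : Seminorm ℝ (Fin m → ℝ) := Seminorm.of φ hadd hsmul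
    have hN : φ (expandVec m (pow2POS m) ρ) ≤ 4 * φ o := hnorm N hmono hsymm
    have hφo : 0 ≤ φ o := apply_nonneg N o
    linarith
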